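/- Let $(Y,d)$ be a metric space equipped with a Borel measure $\nu$, write $B(x,r)$ for the closed ball of radius $r$ around $x$, and let $K>0$, $C>0$, $D>0$ and $a>1$ be constants such that $\nu(B(x,r))\le K\,r^{D}$ for every $x\in Y$ and every $r>0$ (upper Ahlfors regularity). Let $h:Y\times Y\to\mathbb{N}$ be a function satisfying $d(x,y)\le C\,a^{-h(x,y)}$ for all $x\ne y$ in $Y$. If $\beta>1$ and $\beta^{2}<a^{D}$, then for every $x\in Y$ the integral $\int_Y \beta^{2h(x,y)}\,d\nu(y)$ is finite. -/

import Mathlib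

open MeasureTheory

/-!
The points `y` with `h x y = m` lie in the ball of radius `C * a ^ (-m)` around `x`, so they have
mass at most `K * C ^ D * (a ^ D)⁻¹ ^ m`. Integrating over each level set of `h x` separately
bounds the integral by a geometric series of ratio `β ^ 2 / a ^ D`.
-/

open scoped ENNReal

theorem lintegral_comp_le_tsum_mul_measure_fiber {Y ι : Type*} [Countable ι] [MeasurableSpace Y]
    (ν : Measure Y) (c : ι → ℝ≥0∞) (n : Y → ι) :
    ∫⁻ y, c (n y) ∂ν ≤ ∑' i, c i * ν (n ⁻¹' {i}) := by
  -- The fibers need not be measurable, so we sum over their measurable hulls.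
  let s (i : ι) : Set Y := toMeasurable ν (n ⁻¹' {i})
  have hs (i : ι) : MeasurableSet (s i) := measurableSet_toMeasurable _ _
  have mem_s (y : Y) : y ∈ s (n y) := subset_toMeasurable _ _ rfl
  calc ∫⁻ y, c (n y) ∂ν
      = ∫⁻ y, (s (n y)).indicator (fun _ => c (n y)) y ∂ν := by
        simp only [Set.indicator_of_mem (mem_s _)]
    _ ≤ ∫⁻ y, ∑' i, (s i).indicator (fun _ => c i) y ∂ν :=
        lintegral_mono fun y => ENNReal.le_tsum (f := fun i => (s i).indicator (fun _ => c i) y) _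
    _ = ∑' i, ∫⁻ y, (s i).indicator (fun _ => c i) y ∂ν :=
        lintegral_tsum fun i => (measurable_const.indicator (hs i)).aemeasurable
    _ = ∑' i, c i * ν (n ⁻¹' {i}) := by
        simp only [lintegral_indicator_const (hs _), s, measure_toMeasurable]

theorem lintegral_pow_le_of_measure_fiber_le {Y : Type*} [MeasurableSpace Y] {ν : Measure Y}
    {n : Y → ℕ} {A q : ℝ≥0∞} (hn : ∀ m, ν (n ⁻¹' {m}) ≤ A * q ^ m) (b : ℝ≥0∞) :
    ∫⁻ y, b ^ n y ∂ν ≤ A * (1 - b * q)⁻¹ :=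
  calc ∫⁻ y, b ^ n y ∂ν
      ≤ ∑' m, b ^ m * ν (n ⁻¹' {m}) := lintegral_comp_le_tsum_mul_measure_fiber ν (b ^ ·) n
    _ ≤ ∑' m, b ^ m * (A * q ^ m) := by gcongr with m; exact hn m
    _ = ∑' m, A * (b * q) ^ m := by simp only [mul_pow, mul_left_comm]
    _ = A * (1 - b * q)⁻¹ := by rw [ENNReal.tsum_mul_left, ENNReal.tsum_geometric]

theorem mul_zpow_neg_rpow {C a : ℝ} (hC : 0 ≤ C) (ha : 0 ≤ a) (D : ℝ) (m : ℕ) :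
    (C * a ^ (-(m : ℤ))) ^ D = C ^ D * (a ^ D)⁻¹ ^ m := by
  rw [Real.mul_rpow hC (by positivity), zpow_neg, zpow_natCast, Real.inv_rpow (by positivity),
    ← Real.rpow_pow_comm ha, inv_pow]

section LevelSets

variable {Y : Type*} [PseudoMetricSpace Y] {x : Y} {n : Y → ℕ} {C a : ℝ}

theorem fiber_subset_closedBall (hC : 0 ≤ C) (ha : 0 ≤ a)
    (hn : ∀ y, x ≠ y → dist x y ≤ C * a ^ (-(n y : ℤ))) (m : ℕ) :
    n ⁻¹' {m} ⊆ Metric.closedBall x (C * a ^ (-(m : ℤ))) := by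
  rintro y rfl
  rcases eq_or_ne x y with rfl | hxy
  · exact Metric.mem_closedBall_self (by positivity)
  · exact Metric.mem_closedBall'.2 (hn y hxy)

theorem measure_fiber_le_of_measure_closedBall_le [MeasurableSpace Y] {ν : Measure Y} {K D : ℝ}
    (hC : 0 < C) (ha : 0 < a)
    (hν : ∀ r : ℝ, 0 < r → ν (Metric.closedBall x r) ≤ ENNReal.ofReal (K * r ^ D))
    (hn : ∀ y, x ≠ y → dist x y ≤ C * a ^ (-(n y : ℤ))) (m : ℕ) :
    ν (n ⁻¹' {m}) ≤ ENNReal.ofReal (K * C ^ D) * (ENNReal.ofReal (a ^ D))⁻¹ ^ m := by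
  have haD : 0 < a ^ D := Real.rpow_pos_of_pos ha D
  calc ν (n ⁻¹' {m})
      ≤ ν (Metric.closedBall x (C * a ^ (-(m : ℤ)))) :=
        measure_mono (fiber_subset_closedBall hC.le ha.le hn m)
    _ ≤ ENNReal.ofReal (K * (C * a ^ (-(m : ℤ))) ^ D) := hν _ (by positivity)
    _ = ENNReal.ofReal (K * C ^ D) * (ENNReal.ofReal (a ^ D))⁻¹ ^ m := by
        rw [mul_zpow_neg_rpow hC.le ha.le, ← mul_assoc, ENNReal.ofReal_mul' (by positivity),
          ENNReal.ofReal_pow (by positivity), ENNReal.ofReal_inv_of_pos haD]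

theorem integral_finite_of_subcritical_general [MeasurableSpace Y] {ν : Measure Y} {K D : ℝ}
    (hC : 0 < C) (ha : 0 < a)
    (hν : ∀ r : ℝ, 0 < r → ν (Metric.closedBall x r) ≤ ENNReal.ofReal (K * r ^ D))
    (hn : ∀ y, x ≠ y → dist x y ≤ C * a ^ (-(n y : ℤ)))
    {b : ℝ≥0∞} (hb : b < ENNReal.ofReal (a ^ D)) :
    ∫⁻ y, b ^ n y ∂ν < ⊤ := by
  have ratio_lt_one : b * (ENNReal.ofReal (a ^ D))⁻¹ < 1 := by
    rw [← div_eq_mul_inv]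
    exact ENNReal.div_lt_of_lt_mul (by rwa [one_mul])
  calc ∫⁻ y, b ^ n y ∂ν
      ≤ ENNReal.ofReal (K * C ^ D) * (1 - b * (ENNReal.ofReal (a ^ D))⁻¹)⁻¹ :=
        lintegral_pow_le_of_measure_fiber_le
          (measure_fiber_le_of_measure_closedBall_le hC ha hν hn) b
    _ < ⊤ := ENNReal.mul_lt_top ENNReal.ofReal_lt_top
        (ENNReal.inv_lt_top.2 (tsub_pos_of_lt ratio_lt_one))

end LevelSets

theorem integral_finite_of_subcritical
    {Y : Type*} [MetricSpace Y] [MeasurableSpace Y] [BorelSpace Y]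
    (ν : Measure Y) (K C D a : ℝ)
    (hK : 0 < K) (hC : 0 < C) (hD : 0 < D) (ha : 1 < a)
    (hAhlfors : ∀ x : Y, ∀ r : ℝ, 0 < r →
      ν (Metric.closedBall x r) ≤ ENNReal.ofReal (K * r ^ D))
    (h : Y → Y → ℕ)
    (hh : ∀ x y : Y, x ≠ y → dist x y ≤ C * a ^ (-(h x y : ℤ)))
    (β : ℝ) (hβ : 1 < β) (hβa : β ^ 2 < a ^ D) :
    ∀ x : Y, ∫⁻ y, ENNReal.ofReal (β ^ (2 * h x y)) ∂ν < ⊤ := by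
  intro x
  simpa only [pow_mul, ENNReal.ofReal_pow (sq_nonneg β)] using
    integral_finite_of_subcritical_general hC (one_pos.trans ha) (hAhlfors x) (hh x)
      ((ENNReal.ofReal_lt_ofReal_iff_of_nonneg (sq_nonneg β)).2 hβa)
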